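/- arXiv:math/0402147 — 6 statements merged into one kernel-verified Lean document; each statement's English description precedes it below -/
import Mathlib

section
/- Let Λ be a lattice in ℂ and let a ∈ ℂ satisfy aΛ ⊆ Λ. Then 2·Re(a) is an integer and |a|² (the square of the absolute value of a, i.e. Complex.normSq a) is an integer. -/
/-- If `Λ = ℤv + ℤw` is a lattice in `ℂ` (with `v, w` linearly independent
over `ℝ`) and `a·Λ ⊆ Λ`, then `2·Re a` and `|a|² = Complex.normSq a` are integers. -/
theorem lattice_mul_stable_trace_norm_int (Λ : AddSubgroup ℂ) (v w : ℂ)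
    (hindep : LinearIndependent ℝ ![v, w])
    (hΛ : Λ = AddSubgroup.closure {v, w})
    (a : ℂ) (ha : ∀ x ∈ Λ, a * x ∈ Λ) :
    (∃ m : ℤ, 2 * a.re = (m : ℝ)) ∧ (∃ m : ℤ, Complex.normSq a = (m : ℝ)) := by
  have hv : a * v ∈ Λ := ha v (hΛ ▸ AddSubgroup.subset_closure (by simp))
  have hw : a * w ∈ Λ := ha w (hΛ ▸ AddSubgroup.subset_closure (by simp))
  rw [hΛ, AddSubgroup.mem_closure_pair] at hv hw
  obtain ⟨p, q, hv⟩ := hv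
  obtain ⟨r, s, hw⟩ := hw
  have hD : v.re * w.im - v.im * w.re ≠ 0 := by
    intro h0
    rw [LinearIndependent.pair_iff] at hindep
    have e1 := hindep w.re (-v.re) (by
      apply Complex.ext <;> simp <;> linarith)
    have e2 := hindep w.im (-v.im) (by
      apply Complex.ext <;> simp <;> linarith)
    have e3 : w = 0 := Complex.ext e1.1 e2.1
    have e4 := hindep 0 1 (by simp [e3])
    exact one_ne_zero e4.2
  have h1 := congrArg Complex.re hv
  have h2 := congrArg Complex.im hv
  have h3 := congrArg Complex.re hw
  have h4 := congrArg Complex.im hw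
  simp only [zsmul_eq_mul, Complex.add_re, Complex.add_im, Complex.mul_re, Complex.mul_im,
    Complex.intCast_re, Complex.intCast_im, zero_mul, sub_zero, add_zero] at h1 h2 h3 h4
  refine ⟨⟨p + s, ?_⟩, ⟨p * s - q * r, ?_⟩⟩
  · apply mul_right_cancel₀ hD
    push_cast
    linear_combination -h1 * w.im + h2 * w.re - h4 * v.re + h3 * v.im
  · apply mul_right_cancel₀ hD
    rw [Complex.normSq_apply]
    push_cast
    linear_combination -h1 * (a.re * w.im + a.im * w.re) - (p * v.re + q * w.re) * h4
      + h2 * (a.re * w.re - a.im * w.im) + (p * v.im + q * w.im) * h3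
end

section
/- Let M be a finite multiset of natural numbers, each of whose elements r satisfies r ≥ 2, and suppose that the sum over r ∈ M of (1 − 1/r), computed in ℚ, equals 2. Then M is equal to one of the four multisets {2,2,2,2}, {3,3,3}, {2,4,4}, {2,3,6}. -/
theorem inv_bounds_aux (r : ℕ) (h : 2 ≤ r) : 0 < 1 / (r : ℚ) ∧ 1 / (r : ℚ) ≤ 1 / 2 := by
  have h' : (2 : ℚ) ≤ r := by exact_mod_cast h
  exact ⟨by positivity, one_div_le_one_div_of_le (by norm_num) h'⟩

theorem eq_two_aux (r : ℕ) (h : 1 / (r : ℚ) = 1 / 2) : r = 2 := by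
  have : (r : ℚ) = 2 := by simpa using h
  exact_mod_cast this

theorem three_aux (a b c : ℕ) (ha : 2 ≤ a) (hab : a ≤ b) (hbc : b ≤ c)
    (h : 1 / (a : ℚ) + 1 / (b : ℚ) + 1 / (c : ℚ) = 1) :
    (a = 3 ∧ b = 3 ∧ c = 3) ∨ (a = 2 ∧ b = 4 ∧ c = 4) ∨ (a = 2 ∧ b = 3 ∧ c = 6) := by
  have a0 : (0 : ℚ) < a := by exact_mod_cast (by omega : 0 < a)
  have b0 : (0 : ℚ) < b := by exact_mod_cast (by omega : 0 < b)
  have c0 : (0 : ℚ) < c := by exact_mod_cast (by omega : 0 < c)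
  have h' : b * c + a * c + a * b = a * b * c := by
    field_simp at h
    have : (b * c + a * c + a * b : ℚ) = a * b * c := by linarith
    exact_mod_cast this
  have ha3 : a ≤ 3 := by
    by_contra hh
    have h4 : 4 ≤ a := by omega
    have e1 : b * c * 4 ≤ b * c * a := Nat.mul_le_mul_left _ h4
    have e2 : a * c ≤ b * c := Nat.mul_le_mul_right _ hab
    have e3 : a * b ≤ b * c := by rw [mul_comm b c]; exact Nat.mul_le_mul_right _ (hab.trans hbc)
    have e4 : 0 < b * c := Nat.mul_pos (by omega) (by omega)
    nlinarith
  have hb4 : b ≤ 4 := by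
    by_contra hh
    have h5 : 5 ≤ b := by omega
    interval_cases a <;> nlinarith
  interval_cases a <;> interval_cases b <;> omega

/-- Corollary 4.5: a finite multiset of integers `r ≥ 2` with
`Σ (1 − 1/r) = 2` (in `ℚ`) is `{2,2,2,2}`, `{3,3,3}`, `{2,4,4}`, or `{2,3,6}`. -/
theorem ramification_multisets (M : Multiset ℕ) (h2 : ∀ r ∈ M, 2 ≤ r)
    (hsum : (M.map (fun r => 1 - 1 / (r : ℚ))).sum = 2) :
    M = {2, 2, 2, 2} ∨ M = {3, 3, 3} ∨ M = {2, 4, 4} ∨ M = {2, 3, 6} := by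
  obtain ⟨l, hl, hs⟩ : ∃ l : List ℕ, (l : Multiset ℕ) = M ∧ l.Pairwise (· ≤ ·) :=
    ⟨M.sort (· ≤ ·), Multiset.sort_eq M _, Multiset.pairwise_sort M _⟩
  subst hl
  have hb : ∀ r ∈ l, 0 < 1 / (r : ℚ) ∧ 1 / (r : ℚ) ≤ 1 / 2 :=
    fun r hr => inv_bounds_aux r (h2 r (by simpa using hr))
  replace hsum : (l.map (fun r : ℕ => 1 - 1 / (r : ℚ))).sum = 2 := by
    rw [← hsum, ← Multiset.sum_coe, ← Multiset.map_coe]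
    simp only [Multiset.bind_def, Multiset.pure_def, Multiset.bind_singleton, Multiset.map_map,
      Function.comp_def]
  rcases l with _ | ⟨a, _ | ⟨b, _ | ⟨c, _ | ⟨d, _ | ⟨e, t⟩⟩⟩⟩⟩
  · simp at hsum
  · have h1 := hb a (by simp)
    simp only [List.map_cons, List.map_nil, List.sum_cons, List.sum_nil] at hsum
    linarith
  · have h1 := hb a (by simp)
    have h2 := hb b (by simp)
    simp only [List.map_cons, List.map_nil, List.sum_cons, List.sum_nil] at hsum
    linarith
  · simp only [List.map_cons, List.map_nil, List.sum_cons, List.sum_nil] at hsum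
    have hab : a ≤ b := by simp at hs; omega
    have hbc : b ≤ c := by simp at hs; omega
    rcases three_aux a b c (h2 a (by simp)) hab hbc (by linarith) with
      ⟨rfl, rfl, rfl⟩ | ⟨rfl, rfl, rfl⟩ | ⟨rfl, rfl, rfl⟩
    · right; left; rfl
    · right; right; left; rfl
    · right; right; right; rfl
  · have h1 := hb a (by simp)
    have h2 := hb b (by simp)
    have h3 := hb c (by simp)
    have h4 := hb d (by simp)
    simp only [List.map_cons, List.map_nil, List.sum_cons, List.sum_nil] at hsum
    obtain rfl := eq_two_aux a (by linarith)
    obtain rfl := eq_two_aux b (by linarith)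
    obtain rfl := eq_two_aux c (by linarith)
    obtain rfl := eq_two_aux d (by linarith)
    left; rfl
  · have h1 := hb a (by simp)
    have h2 := hb b (by simp)
    have h3 := hb c (by simp)
    have h4 := hb d (by simp)
    have h5 := hb e (by simp)
    have ht : 0 ≤ (t.map (fun r : ℕ => 1 - 1 / (r : ℚ))).sum := by
      apply List.sum_nonneg
      intro x hx
      obtain ⟨r, hr, rfl⟩ := List.mem_map.1 hx
      have := hb r (by simp [hr])
      linarith
    simp only [List.map_cons, List.sum_cons] at hsum
    linarith
end

section
/- Let M be a finite multiset of elements of ℕ∞ = ℕ ∪ {∞}, each of whose elements r satisfies r ≥ 2, and suppose that the sum over r ∈ M of (1 − 1/r), computed in ℝ with the convention 1/∞ = 0, equals 2. Then M is equal to one of the six multisets {2,2,2,2}, {3,3,3}, {2,4,4}, {2,3,6}, {∞,∞}, {2,2,∞}. -/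
/-- The weight `1/r`, with `1/∞ = 0`. -/
noncomputable def ramInv (r : ℕ∞) : ℝ := 1 / (r.toNat : ℝ)

lemma ramInv_top : ramInv ⊤ = 0 := by simp [ramInv]

lemma ramInv_coe (n : ℕ) : ramInv (n : ℕ∞) = 1 / (n : ℝ) := by simp [ramInv]

lemma ramInv_nonneg (r : ℕ∞) : 0 ≤ ramInv r := by unfold ramInv; positivity

lemma ramInv_anti {r s : ℕ∞} (hr : 2 ≤ r) (h : r ≤ s) : ramInv s ≤ ramInv r := by
  induction s using ENat.recTopCoe with
  | top => rw [ramInv_top]; exact ramInv_nonneg r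
  | coe m =>
    induction r using ENat.recTopCoe with
    | top => simp at h
    | coe n =>
      have h1 : n ≤ m := by exact_mod_cast h
      have h2 : 2 ≤ n := by exact_mod_cast hr
      rw [ramInv_coe, ramInv_coe]
      have : (0 : ℝ) < n := by exact_mod_cast (by omega : 0 < n)
      exact one_div_le_one_div_of_le this (by exact_mod_cast h1)

lemma ramInv_le_half {r : ℕ∞} (hr : 2 ≤ r) : ramInv r ≤ 1 / 2 := by
  have := ramInv_anti (le_refl 2) hr
  have h := ramInv_coe 2
  push_cast at h
  linarith

lemma ramInv_bound {r : ℕ∞} (hr : 2 ≤ r) (k : ℕ) (hk : 0 < k)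
    (h : 1 / (k : ℝ) ≤ ramInv r) : ∃ n : ℕ, r = n ∧ 2 ≤ n ∧ n ≤ k := by
  have hk' : (0 : ℝ) < k := by exact_mod_cast hk
  induction r using ENat.recTopCoe with
  | top =>
    rw [ramInv_top] at h
    have : 0 < 1 / (k : ℝ) := by positivity
    linarith
  | coe n =>
    have h2 : 2 ≤ n := by exact_mod_cast hr
    have hn : (0 : ℝ) < n := by exact_mod_cast (by omega : 0 < n)
    rw [ramInv_coe] at h
    have := (one_div_le_one_div hk' hn).1 h
    exact ⟨n, rfl, h2, by exact_mod_cast this⟩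

lemma ramInv_eq {r : ℕ∞} (hr : 2 ≤ r) (k : ℕ) (hk : 0 < k)
    (h : ramInv r = 1 / (k : ℝ)) : r = k := by
  obtain ⟨n, rfl, _, _⟩ := ramInv_bound hr k hk h.ge
  rw [ramInv_coe] at h
  have : (n : ℝ) = k := by simpa using h
  exact_mod_cast this

lemma ramInv_eq_zero {r : ℕ∞} (hr : 2 ≤ r) (h : ramInv r = 0) : r = ⊤ := by
  induction r using ENat.recTopCoe with
  | top => rfl
  | coe n =>
    have h2 : 2 ≤ n := by exact_mod_cast hr
    rw [ramInv_coe] at h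
    have : n = 0 := by simpa using h
    omega

lemma ram_sum_ge (l : List ℕ∞) (h : ∀ r ∈ l, 2 ≤ r) :
    0 ≤ (l.map (fun r => 1 - ramInv r)).sum := by
  apply List.sum_nonneg
  intro x hx
  obtain ⟨r, hr, rfl⟩ := List.mem_map.1 hx
  have := ramInv_le_half (h r hr)
  linarith

lemma ram_list (l : List ℕ∞) (h2 : ∀ r ∈ l, 2 ≤ r) (hs : l.Pairwise (· ≤ ·))
    (hsum : (l.map (fun r => 1 - ramInv r)).sum = 2) :
    l = [2, 2, 2, 2] ∨ l = [3, 3, 3] ∨ l = [2, 4, 4] ∨ l = [2, 3, 6] ∨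
      l = [⊤, ⊤] ∨ l = [2, 2, ⊤] := by
  have i2 := ramInv_coe 2
  have i3 := ramInv_coe 3
  have i4 := ramInv_coe 4
  match l, h2, hs, hsum with
  | [], _, _, hsum => simp at hsum
  | [a], _, _, hsum =>
    have := ramInv_nonneg a
    simp at hsum
    linarith
  | [a, b], h2, _, hsum =>
    have ha := ramInv_nonneg a
    have hb := ramInv_nonneg b
    simp at hsum h2
    have := ramInv_eq_zero h2.1 (by linarith)
    have := ramInv_eq_zero h2.2 (by linarith)
    simp [*]
  | [a, b, c], h2, hs, hsum =>
    simp at hsum h2 hs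
    obtain ⟨ha, hb, hc⟩ := h2
    obtain ⟨⟨hab, hac⟩, hbc⟩ := hs
    have jab := ramInv_anti ha hab
    have jbc := ramInv_anti hb hbc
    obtain ⟨n, rfl, hn, hn'⟩ := ramInv_bound ha 3 (by norm_num) (by push_cast; linarith)
    interval_cases n
    · obtain ⟨m, rfl, hm, hm'⟩ := ramInv_bound hb 4 (by norm_num)
        (by push_cast at *; linarith)
      interval_cases m
      · have := ramInv_eq_zero hc (by push_cast at *; linarith)
        subst this
        simp
      · have := ramInv_eq hc 6 (by norm_num) (by push_cast at *; linarith)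
        subst this
        simp
      · have := ramInv_eq hc 4 (by norm_num) (by push_cast at *; linarith)
        subst this
        simp
    · have h1 := ramInv_eq hb 3 (by norm_num) (by push_cast at *; linarith)
      have h2 := ramInv_eq hc 3 (by norm_num) (by push_cast at *; linarith)
      subst h1 h2
      simp
  | a :: b :: c :: d :: t, h2, _, hsum =>
    have ht := ram_sum_ge t (fun r hr => h2 r (by simp [hr]))
    have ka := h2 a (by simp)
    have kb := h2 b (by simp)
    have kc := h2 c (by simp)
    have kd := h2 d (by simp)
    have ja := ramInv_le_half ka
    have jb := ramInv_le_half kb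
    have jc := ramInv_le_half kc
    have jd := ramInv_le_half kd
    simp only [List.map_cons, List.sum_cons] at hsum
    have ea := ramInv_eq ka 2 (by norm_num) (by push_cast; linarith)
    have eb := ramInv_eq kb 2 (by norm_num) (by push_cast; linarith)
    have ec := ramInv_eq kc 2 (by norm_num) (by push_cast; linarith)
    have ed := ramInv_eq kd 2 (by norm_num) (by push_cast; linarith)
    cases t with
    | nil => left; simp [ea, eb, ec, ed]
    | cons e t =>
      have ke := h2 e (by simp)
      have je := ramInv_le_half ke
      have ht' := ram_sum_ge t (fun r hr => h2 r (by simp [hr]))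
      simp only [List.map_cons, List.sum_cons] at hsum
      linarith

/-- Remark 4.7: a finite multiset of elements `r ∈ ℕ∞` with `r ≥ 2` and
`Σ (1 − 1/r) = 2` (in `ℝ`, with the convention `1/∞ = 0`) is one of
`{2,2,2,2}`, `{3,3,3}`, `{2,4,4}`, `{2,3,6}`, `{∞,∞}`, `{2,2,∞}`. -/
theorem ramification_multisets_with_top (M : Multiset ℕ∞) (h2 : ∀ r ∈ M, 2 ≤ r)
    (hsum : (M.map (fun r : ℕ∞ => match r with
      | ⊤ => (1 : ℝ)
      | (n : ℕ) => 1 - 1 / (n : ℝ))).sum = 2) :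
    M = {2, 2, 2, 2} ∨ M = {3, 3, 3} ∨ M = {2, 4, 4} ∨ M = {2, 3, 6} ∨
      M = {⊤, ⊤} ∨ M = {2, 2, ⊤} := by
  have hf : (fun r : ℕ∞ => match r with
      | ⊤ => (1 : ℝ)
      | (n : ℕ) => 1 - 1 / (n : ℝ)) = fun r => 1 - ramInv r := by
    funext r
    induction r using ENat.recTopCoe with
    | top => rw [ramInv_top, sub_zero]; rfl
    | coe n => rw [ramInv_coe]
  have hsum' : (M.map (fun r => 1 - ramInv r)).sum = 2 := by
    rw [← hf]; exact hsum
  obtain ⟨l, hl, hs⟩ : ∃ l : List ℕ∞, (l : Multiset ℕ∞) = M ∧ l.Pairwise (· ≤ ·) :=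
    ⟨M.sort (· ≤ ·), Multiset.sort_eq _ _, Multiset.pairwise_sort _ _⟩
  subst hl
  rcases ram_list l (fun r hr => h2 r (by simpa using hr)) hs (by simpa using hsum') with
    h | h | h | h | h | h <;> subst h
  · exact Or.inl rfl
  · exact Or.inr (Or.inl rfl)
  · exact Or.inr (Or.inr (Or.inl rfl))
  · exact Or.inr (Or.inr (Or.inr (Or.inl rfl)))
  · exact Or.inr (Or.inr (Or.inr (Or.inr (Or.inl rfl))))
  · exact Or.inr (Or.inr (Or.inr (Or.inr (Or.inr rfl))))
end

section
/- Let Λ be a lattice in ℂ and let ω ∈ ℂ with ω ≠ 1 and ωΛ = Λ. Then the map x ↦ (1−ω)·x induces an isomorphism of additive groups from the subgroup of the torus ℂ/Λ consisting of elements fixed by multiplication by ω (that is, {x ∈ ℂ/Λ : ω·x = x}) onto the quotient group Λ/(1−ω)Λ. -/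
/-- Multiplication by `ω` on the torus `ℂ/Λ`, induced when `ωΛ ⊆ Λ`. -/
noncomputable def torusMul (Λ : AddSubgroup ℂ) (ω : ℂ) (h : ∀ x ∈ Λ, ω * x ∈ Λ) :
    ℂ ⧸ Λ →+ ℂ ⧸ Λ :=
  QuotientAddGroup.map Λ Λ (AddMonoidHom.mulLeft ω) h

/-- The subgroup of the torus `ℂ/Λ` fixed by multiplication by `ω`. -/
noncomputable def torusFixed (Λ : AddSubgroup ℂ) (ω : ℂ) (h : ∀ x ∈ Λ, ω * x ∈ Λ) :
    AddSubgroup (ℂ ⧸ Λ) :=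
  AddMonoidHom.ker (torusMul Λ ω h - AddMonoidHom.id _)

/-- The subgroup `c·Λ` of `Λ`. -/
noncomputable def subLattice (Λ : AddSubgroup ℂ) (c : ℂ) : AddSubgroup Λ :=
  (AddSubgroup.map (AddMonoidHom.mulLeft c) Λ).comap Λ.subtype

/-- Lemma 5.3: if `Λ = ℤv + ℤw` is a lattice in `ℂ`, `ω ≠ 1` and
`ωΛ = Λ`, then `x ↦ (1−ω)x` induces an additive isomorphism from the subgroup
`{x ∈ ℂ/Λ : ω·x = x}` of the torus onto the quotient group `Λ/(1−ω)Λ`. -/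
theorem torus_fixed_points_iso (Λ : AddSubgroup ℂ) (v w : ℂ)
    (hindep : LinearIndependent ℝ ![v, w])
    (hΛ : Λ = AddSubgroup.closure {v, w})
    (ω : ℂ) (hω1 : ω ≠ 1)
    (hω : AddSubgroup.map (AddMonoidHom.mulLeft ω) Λ = Λ)
    (hsub : ∀ x ∈ Λ, ω * x ∈ Λ) :
    ∃ e : torusFixed Λ ω hsub ≃+ Λ ⧸ subLattice Λ (1 - ω),
      ∀ (t : ℂ) (ht : (1 - ω) * t ∈ Λ)
        (hmem : (QuotientAddGroup.mk t : ℂ ⧸ Λ) ∈ torusFixed Λ ω hsub),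
        e ⟨QuotientAddGroup.mk t, hmem⟩ =
          QuotientAddGroup.mk (⟨(1 - ω) * t, ht⟩ : Λ) := by
  have hc : (1 - ω) ≠ 0 := sub_ne_zero.mpr hω1.symm
  have key : ∀ t : ℂ, (QuotientAddGroup.mk t : ℂ ⧸ Λ) ∈ torusFixed Λ ω hsub ↔
      (1 - ω) * t ∈ Λ := by
    intro t
    have h1 : (QuotientAddGroup.mk t : ℂ ⧸ Λ) ∈ torusFixed Λ ω hsub ↔
        (QuotientAddGroup.mk (ω * t) : ℂ ⧸ Λ) - QuotientAddGroup.mk t = 0 := Iff.rfl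
    rw [h1, sub_eq_zero, QuotientAddGroup.eq]
    have h2 : -(ω * t) + t = (1 - ω) * t := by ring
    rw [h2]
  let g : Λ →+ torusFixed Λ ω hsub :=
    { toFun := fun l => ⟨QuotientAddGroup.mk ((1 - ω)⁻¹ * (l : ℂ)), (key _).2 (by
        rw [mul_inv_cancel_left₀ hc]; exact l.2)⟩
      map_zero' := by
        apply Subtype.ext
        simp
      map_add' := by
        intro a b
        apply Subtype.ext
        simp [mul_add] }
  have hg : ∀ l : Λ, g l = 0 ↔ l ∈ subLattice Λ (1 - ω) := by
    intro l
    have h1 : g l = 0 ↔ (QuotientAddGroup.mk ((1 - ω)⁻¹ * (l : ℂ)) : ℂ ⧸ Λ) = 0 :=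
      Subtype.ext_iff
    have h2 : l ∈ subLattice Λ (1 - ω) ↔ ∃ x ∈ Λ, (1 - ω) * x = (l : ℂ) := Iff.rfl
    rw [h1, h2, QuotientAddGroup.eq_zero_iff]
    constructor
    · intro h
      exact ⟨_, h, mul_inv_cancel_left₀ hc _⟩
    · rintro ⟨x, hx, h⟩
      rw [← h, inv_mul_cancel_left₀ hc]
      exact hx
  let f : Λ ⧸ subLattice Λ (1 - ω) →+ torusFixed Λ ω hsub :=
    QuotientAddGroup.lift _ g (fun l hl => (hg l).2 hl)
  have hft : ∀ (t : ℂ) (ht : (1 - ω) * t ∈ Λ)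
        (hmem : (QuotientAddGroup.mk t : ℂ ⧸ Λ) ∈ torusFixed Λ ω hsub),
        f (QuotientAddGroup.mk (⟨(1 - ω) * t, ht⟩ : Λ)) = ⟨QuotientAddGroup.mk t, hmem⟩ := by
    intro t ht hmem
    apply Subtype.ext
    change (QuotientAddGroup.mk ((1 - ω)⁻¹ * ((1 - ω) * t)) : ℂ ⧸ Λ) = QuotientAddGroup.mk t
    rw [inv_mul_cancel_left₀ hc]
  have hf : Function.Bijective f := by
    constructor
    · rw [injective_iff_map_eq_zero]
      intro a
      induction a using QuotientAddGroup.induction_on with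
      | H l =>
        intro h
        exact (QuotientAddGroup.eq_zero_iff l).2 ((hg l).1 h)
    · rintro ⟨y, hy⟩
      induction y using QuotientAddGroup.induction_on with
      | H t => exact ⟨_, hft t ((key t).1 hy) hy⟩
  refine ⟨(AddEquiv.ofBijective f hf).symm, fun t ht hmem => ?_⟩
  rw [AddEquiv.symm_apply_eq]
  exact (hft t ht hmem).symm
end

section
/- Let Λ be a lattice in ℂ, let ω ∈ ℂ be a root of unity (ωⁿ = 1 for some n ≥ 1), let a ∈ ℂ with a ≠ 0, and let b ∈ ℂ. Then the following are equivalent: (i) for every t ∈ ℂ there exists k ∈ ℕ with aωt + b − ω^k(at + b) ∈ Λ; (ii) (1−ω)·b ∈ Λ. -/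
/-- end of the proof of Theorem 3.1: for a lattice `Λ = ℤv + ℤw` in `ℂ`,
a root of unity `ω`, `a ≠ 0` and `b ∈ ℂ`, the affine map `L(t) = at + b` descends to the
quotient of the torus by `t ↦ ωt` — i.e. for every `t` there is `k` with
`aωt + b − ω^k(at + b) ∈ Λ` — if and only if `(1−ω)·b ∈ Λ`. -/
theorem affine_descends_iff (Λ : AddSubgroup ℂ) (v w : ℂ)
    (hindep : LinearIndependent ℝ ![v, w])
    (hΛ : Λ = AddSubgroup.closure {v, w})
    (ω : ℂ) (n : ℕ) (hn : 1 ≤ n) (hωn : ω ^ n = 1)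
    (a : ℂ) (ha : a ≠ 0) (b : ℂ) :
    (∀ t : ℂ, ∃ k : ℕ, a * ω * t + b - ω ^ k * (a * t + b) ∈ Λ) ↔ (1 - ω) * b ∈ Λ := by
  constructor
  · intro h
    let f : ℕ × ℤ × ℤ → ℂ := fun p =>
      ((p.2.1 • v + p.2.2 • w) - b + ω ^ p.1 * b) / (a * (ω - ω ^ p.1))
    have hf : ¬ Function.Surjective f := fun hs =>
      not_countable_complex (Set.countable_univ_iff.mpr hs.countable)
    simp only [Function.Surjective, not_forall] at hf
    obtain ⟨t, ht⟩ := hf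
    obtain ⟨k, hk⟩ := h t
    by_cases hω : ω ^ k = ω
    · rw [hω] at hk
      convert hk using 1
      ring
    · exfalso
      apply ht
      rw [hΛ, AddSubgroup.mem_closure_pair] at hk
      obtain ⟨x, y, hxy⟩ := hk
      refine ⟨(k, x, y), ?_⟩
      have hne : ω - ω ^ k ≠ 0 := sub_ne_zero.mpr (Ne.symm hω)
      simp only [f]
      rw [hxy, div_eq_iff (mul_ne_zero ha hne)]
      ring
  · intro h t
    refine ⟨1, ?_⟩
    convert h using 1
    ring
end

section
/- Let n ≥ 2 be an integer, let ω = exp(2πi/n), and let Λ be a lattice in ℂ with ωΛ = Λ. Then the set of points of the torus ℂ/Λ fixed by multiplication by ω, namely {x ∈ ℂ/Λ : ω·x = x}, is finite with exactly 4·sin²(π/n) elements. -/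
open Module in
theorem relIndex_eq_abs_det_real {E : Type*} [AddCommGroup E] [Module ℝ E]
    (L₁ L₂ : AddSubgroup E) (H : L₁ ≤ L₂) {ι : Type*} [DecidableEq ι] [Fintype ι]
    (b₁ b₂ : Basis ι ℝ E) (h₁ : L₁ = .closure (Set.range b₁)) (h₂ : L₂ = .closure (Set.range b₂)) :
    (L₁.relIndex L₂ : ℝ) = |b₂.det b₁| := by
  rw [AddSubgroup.relIndex_eq_natAbs_det L₁ L₂ H (b₁.addSubgroupOfClosure L₁ h₁)
    (b₂.addSubgroupOfClosure L₂ h₂), Nat.cast_natAbs, Int.cast_abs]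
  change |algebraMap ℤ ℝ _| = _
  rw [Basis.det_apply, Basis.det_apply, RingHom.map_det]
  congr; ext
  simp only [Basis.toMatrix_apply, RingHom.mapMatrix_apply, Matrix.map_apply,
    Basis.addSubgroupOfClosure_apply]
  exact Basis.addSubgroupOfClosure_repr_apply ..

theorem normSq_exp_sub_one (n : ℕ) :
    Complex.normSq (Complex.exp (2 * Real.pi * Complex.I / n) - 1) =
      4 * Real.sin (Real.pi / n) ^ 2 := by
  have h : (2 * Real.pi * Complex.I / n : ℂ) =
      ((2 * (Real.pi / n) : ℝ) : ℂ) * Complex.I := by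
    push_cast; ring
  rw [h, Complex.exp_mul_I, ← Complex.ofReal_cos, ← Complex.ofReal_sin, Complex.normSq_apply]
  simp only [Complex.sub_re, Complex.add_re, Complex.mul_re, Complex.ofReal_re, Complex.ofReal_im,
    Complex.I_re, Complex.I_im, Complex.one_re, Complex.sub_im, Complex.add_im, Complex.mul_im,
    Complex.one_im]
  rw [Real.cos_two_mul, Real.sin_two_mul]
  have := Real.sin_sq_add_cos_sq (Real.pi / n)
  linear_combination 4 * (Real.cos (Real.pi / n) ^ 2 - 1) * this

theorem relIndex_mul_lattice (Λ : AddSubgroup ℂ) (v w α : ℂ) (hα : α ≠ 0)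
    (hindep : LinearIndependent ℝ ![v, w])
    (hΛ : Λ = AddSubgroup.closure {v, w})
    (hsub : AddSubgroup.map (AddMonoidHom.mulLeft α) Λ ≤ Λ) :
    ((AddSubgroup.map (AddMonoidHom.mulLeft α) Λ).relIndex Λ : ℝ) = Complex.normSq α := by
  let b : Module.Basis (Fin 2) ℝ ℂ := basisOfLinearIndependentOfCardEqFinrank hindep (by simp)
  have hb : ⇑b = ![v, w] := coe_basisOfLinearIndependentOfCardEqFinrank hindep _
  let e : ℂ ≃ₗ[ℝ] ℂ := LinearEquiv.ofBijective (LinearMap.mulLeft ℝ α) (by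
    constructor
    · exact mul_right_injective₀ hα
    · intro x
      exact ⟨α⁻¹ * x, by simp [hα]⟩)
  have hΛb : Λ = .closure (Set.range b) := by
    rw [hΛ, hb, Matrix.range_cons, Matrix.range_cons, Matrix.range_empty, Set.union_empty]
    rfl
  have hbe : ⇑(b.map e) = LinearMap.mulLeft ℝ α ∘ b := by
    ext i; rfl
  rw [relIndex_eq_abs_det_real _ _ hsub (b.map e) b _ hΛb]
  · rw [hbe, b.det_comp, b.det_self, mul_one]
    have : LinearMap.det (LinearMap.mulLeft ℝ α) = Complex.normSq α :=
      Algebra.norm_complex_apply α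
    rw [this, abs_of_nonneg (Complex.normSq_nonneg _)]
  · conv_lhs => rw [hΛb]
    rw [AddMonoidHom.map_closure, hbe, Set.range_comp]
    rfl


/-- Lemma 5.3, cardinality: for `n ≥ 2`, `ω = exp(2πi/n)`, and a lattice
`Λ = ℤv + ℤw` with `ωΛ = Λ`, the set of points of the torus `ℂ/Λ` fixed by
multiplication by `ω` is finite with exactly `4·sin²(π/n)` elements. -/
theorem card_torus_rotation_fixed_points (n : ℕ) (hn : 2 ≤ n)
    (ω : ℂ) (hωdef : ω = Complex.exp (2 * Real.pi * Complex.I / n))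
    (Λ : AddSubgroup ℂ) (v w : ℂ)
    (hindep : LinearIndependent ℝ ![v, w])
    (hΛ : Λ = AddSubgroup.closure {v, w})
    (hω : AddSubgroup.map (AddMonoidHom.mulLeft ω) Λ = Λ)
    (hsub : ∀ x ∈ Λ, ω * x ∈ Λ) :
    {x : ℂ ⧸ Λ | torusMul Λ ω hsub x = x}.Finite ∧
      (Nat.card {x : ℂ ⧸ Λ | torusMul Λ ω hsub x = x} : ℝ) =
        4 * Real.sin (Real.pi / n) ^ 2 := by
  have hα : ω - 1 ≠ 0 := by
    rw [sub_ne_zero, hωdef]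
    exact (Complex.isPrimitiveRoot_exp n (by omega)).ne_one (by omega)
  set α := ω - 1 with hαdef
  have hle : AddSubgroup.map (AddMonoidHom.mulLeft α) Λ ≤ Λ := by
    rintro _ ⟨x, hx, rfl⟩
    have : ω * x - x ∈ Λ := Λ.sub_mem (hsub x hx) hx
    simpa [hαdef, sub_mul] using this
  have hidx := relIndex_mul_lattice Λ v w α hα hindep hΛ hle
  have hns : Complex.normSq α = 4 * Real.sin (Real.pi / n) ^ 2 := by
    rw [hαdef, hωdef, normSq_exp_sub_one]
  have hset : {x : ℂ ⧸ Λ | torusMul Λ ω hsub x = x} =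
      ((AddSubgroup.map (QuotientAddGroup.mk' Λ) (Λ.comap (AddMonoidHom.mulLeft α)) :
        AddSubgroup (ℂ ⧸ Λ)) : Set (ℂ ⧸ Λ)) := by
    have key : ∀ z : ℂ, torusMul Λ ω hsub (z : ℂ ⧸ Λ) = z ↔ α * z ∈ Λ := by
      intro z
      change ((ω * z : ℂ) : ℂ ⧸ Λ) = z ↔ _
      rw [QuotientAddGroup.eq_iff_sub_mem, hαdef, sub_mul, one_mul]
    ext x
    constructor
    · induction x using QuotientAddGroup.induction_on with
      | H z =>
        intro hz
        exact ⟨z, (key z).1 hz, rfl⟩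
    · rintro ⟨z, hz, rfl⟩
      exact (key z).2 hz
  have hcard : Nat.card {x : ℂ ⧸ Λ | torusMul Λ ω hsub x = x} =
      (AddSubgroup.map (AddMonoidHom.mulLeft α) Λ).relIndex Λ := by
    rw [hset]
    have hinj : Function.Injective (AddMonoidHom.mulLeft α) := mul_right_injective₀ hα
    have hsurj : Function.Surjective (AddMonoidHom.mulLeft α) :=
      fun x => ⟨α⁻¹ * x, by simp [hα]⟩
    have h1 := AddSubgroup.relIndex_map_map_of_injective Λ
      (Λ.comap (AddMonoidHom.mulLeft α)) hinj
    rw [AddSubgroup.map_comap_eq_self_of_surjective hsurj] at h1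
    rw [h1]
    have h2 := AddSubgroup.relIndex_comap (⊥ : AddSubgroup (ℂ ⧸ Λ)) (QuotientAddGroup.mk' Λ)
      (Λ.comap (AddMonoidHom.mulLeft α))
    rw [AddMonoidHom.comap_bot, QuotientAddGroup.ker_mk', AddSubgroup.relIndex_bot_left] at h2
    exact h2.symm
  have hfin : (Nat.card {x : ℂ ⧸ Λ | torusMul Λ ω hsub x = x} : ℝ) = Complex.normSq α := by
    rw [hcard, hidx]
  refine ⟨?_, hfin.trans hns⟩
  have hpos : Nat.card {x : ℂ ⧸ Λ | torusMul Λ ω hsub x = x} ≠ 0 := by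
    intro h0
    rw [h0, Nat.cast_zero] at hfin
    exact hα (Complex.normSq_eq_zero.1 hfin.symm)
  exact Set.finite_coe_iff.1 (Nat.finite_of_card_ne_zero hpos)
end
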